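/- Local polynomial weights satisfy the weight assumptions: let the kernel K : ℝ² → [0,∞) have compact support in [−1,1]², be Lipschitz continuous, and satisfy K_min 𝟙{−Δ ≤ u₁,u₂ ≤ Δ} ≤ K(u₁,u₂) ≤ K_max for constants Δ, K_min, K_max > 0. Under Assumption 4 there exist a sufficiently large p₀ ∈ ℕ, a sufficiently small h₀ > 0 and a sufficiently large constant c > 0 such that for all p ≥ p₀ and h ∈ (c/p, h₀] the restricted bivariate local polynomial estimator of any order m ∈ ℕ (least squares over pairs j < k) is unique, is a linear estimator of the form Σ_{j<k} w_{j,k}(x,y;h) z_{j,k}, and its weights satisfy (W1) with reproduction degree m, (W2), (W3) and (W4). -/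

import Mathlib

open Set

/-- The closed upper triangle `T = {(x,y) ∈ [0,1]² : x ≤ y}`. -/
def upperT : Set (ℝ × ℝ) :=
  {z | z.1 ∈ Set.Icc (0:ℝ) 1 ∧ z.2 ∈ Set.Icc (0:ℝ) 1 ∧ z.1 ≤ z.2}

/-- Sum over pairs `j < k` of design indices. -/
def pairSum {p : ℕ} (g : Fin p → Fin p → ℝ) : ℝ :=
  ∑ j : Fin p, ∑ k : Fin p, if j < k then g j k else 0

/-- Assumption 4 (design density). -/
def DesignQuantile {p : ℕ} (f : ℝ → ℝ) (fmin fmax : ℝ) (x : Fin p → ℝ) : Prop :=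
  0 < fmin ∧ fmin ≤ fmax ∧
  (∃ Kf : NNReal, LipschitzOnWith Kf f (Set.Icc 0 1)) ∧
  (∀ t ∈ Set.Icc (0:ℝ) 1, fmin ≤ f t ∧ f t ≤ fmax) ∧
  (∫ t in (0:ℝ)..1, f t) = 1 ∧
  ∀ j : Fin p, x j ∈ Set.Icc (0:ℝ) 1 ∧
    (∫ t in (0:ℝ)..(x j), f t) = ((j : ℝ) + 1 - 0.5) / p

/-- Index set of the monomials of total degree `≤ m`; cardinality `N_m = (m+1)(m+2)/2`. -/
def MIdx (m : ℕ) := {q : Fin (m + 1) × Fin (m + 1) // (q.1 : ℕ) + (q.2 : ℕ) ≤ m}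

instance (m : ℕ) : Fintype (MIdx m) := by unfold MIdx; infer_instance
instance (m : ℕ) : DecidableEq (MIdx m) := by unfold MIdx; infer_instance

/-- The entries of the vector `U_m(u₁,u₂)` of factorial-weighted monomials; the entry
indexed by `(0,0)` is the constant `1`. -/
noncomputable def Umon (m : ℕ) (q : MIdx m) (u : ℝ × ℝ) : ℝ :=
  u.1 ^ (q.1.1 : ℕ) * u.2 ^ (q.1.2 : ℕ) /
    (((q.1.1 : ℕ).factorial : ℝ) * ((q.1.2 : ℕ).factorial : ℝ))

/-- The weighted least-squares criterion of the restricted bivariate local polynomial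
estimator of order `m` at `z = (x,y) ∈ T` with bandwidth `h` and data `(z_{jk})_{j<k}`. -/
noncomputable def lpLoss {p : ℕ} (m : ℕ) (K : ℝ × ℝ → ℝ) (x : Fin p → ℝ) (h : ℝ)
    (z : ℝ × ℝ) (data : Fin p → Fin p → ℝ) (θ : MIdx m → ℝ) : ℝ :=
  pairSum (fun j k =>
    (data j k - ∑ q : MIdx m, θ q * Umon m q ((x j - z.1) / h, (x k - z.2) / h)) ^ 2 *
      K ((x j - z.1) / h, (x k - z.2) / h))

lemma sum_comp_le_sum_of_injective {α β : Type*} [Fintype α] [Fintype β] {e : α → β}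
    (he : Function.Injective e) {F : β → ℝ} (hF : ∀ b, 0 ≤ F b) :
    ∑ a, F (e a) ≤ ∑ b, F b := by
  classical
  rw [← Finset.sum_image (f := F) (s := Finset.univ) (g := e) (fun a _ b _ h => he h)]
  exact Finset.sum_le_sum_of_subset_of_nonneg (Finset.subset_univ _) fun b _ _ => hF b

lemma pairSum_eq_sum_prod {p : ℕ} (g : Fin p → Fin p → ℝ) :
    pairSum g = ∑ e : Fin p × Fin p, if e.1 < e.2 then g e.1 e.2 else 0 := by
  rw [pairSum, Fintype.sum_prod_type]

section LeastSquares

variable {J ι : Type*} [Fintype J] [Fintype ι]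

lemma sum_mul_gram_apply (κ : J → ℝ) (U : J → ι → ℝ) (v g : ι → ℝ) :
    ∑ q, v q * ∑ e, κ e * (∑ r, g r * U e r) * U e q =
      ∑ e, κ e * (∑ r, g r * U e r) * (∑ r, v r * U e r) := by
  simp only [Finset.mul_sum]
  rw [Finset.sum_comm]
  refine Finset.sum_congr rfl fun e _ => Finset.sum_congr rfl fun q _ => ?_
  ring

lemma exists_gram_solution {κ : J → ℝ} {U : J → ι → ℝ}
    (hpos : ∀ v : ι → ℝ, ∑ e, κ e * (∑ r, v r * U e r) ^ 2 ≤ 0 → v = 0) (b : ι → ℝ) :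
    ∃ g : ι → ℝ, ∀ q, ∑ e, κ e * (∑ r, g r * U e r) * U e q = b q := by
  let T : (ι → ℝ) →ₗ[ℝ] (ι → ℝ) :=
    { toFun := fun g q => ∑ e, κ e * (∑ r, g r * U e r) * U e q
      map_add' := by
        intro g g'
        ext q
        simp only [Pi.add_apply, add_mul, Finset.sum_add_distrib, mul_add]
      map_smul' := by
        intro a g
        ext q
        simp only [Pi.smul_apply, smul_eq_mul, RingHom.id_apply, mul_assoc, ← Finset.mul_sum]
        rw [Finset.mul_sum]
        refine Finset.sum_congr rfl fun e _ => ?_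
        ring }
  have hinj : Function.Injective T := by
    rw [← LinearMap.ker_eq_bot, LinearMap.ker_eq_bot']
    intro g hg
    refine hpos g (le_of_eq ?_)
    have h := sum_mul_gram_apply κ U g g
    have h0 : ∀ q, ∑ e, κ e * (∑ r, g r * U e r) * U e q = 0 := fun q => congrFun hg q
    simp only [h0, mul_zero, Finset.sum_const_zero] at h
    rw [h]
    refine Finset.sum_congr rfl fun e _ => ?_
    ring
  obtain ⟨g, hg⟩ := LinearMap.injective_iff_surjective.1 hinj b
  exact ⟨g, fun q => congrFun hg q⟩

lemma weighted_loss_eq_add {κ : J → ℝ} {U : J → ι → ℝ} {d : J → ℝ} {θ : ι → ℝ}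
    (hθ : ∀ q, ∑ e, κ e * (∑ r, θ r * U e r) * U e q = ∑ e, κ e * d e * U e q) (θ' : ι → ℝ) :
    ∑ e, (d e - ∑ r, θ' r * U e r) ^ 2 * κ e =
      ∑ e, (d e - ∑ r, θ r * U e r) ^ 2 * κ e +
        ∑ e, κ e * (∑ r, (θ' - θ) r * U e r) ^ 2 := by
  have h1 : ∑ e, κ e * (∑ r, θ r * U e r) * (∑ r, (θ' - θ) r * U e r) =
      ∑ e, κ e * d e * (∑ r, (θ' - θ) r * U e r) := by
    rw [← sum_mul_gram_apply]
    simp only [hθ]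
    simp only [Finset.mul_sum]
    rw [Finset.sum_comm]
    refine Finset.sum_congr rfl fun e _ => Finset.sum_congr rfl fun q _ => ?_
    ring
  have h2 : ∀ e, ∑ r, θ' r * U e r = ∑ r, θ r * U e r + ∑ r, (θ' - θ) r * U e r := by
    intro e
    rw [← Finset.sum_add_distrib]
    refine Finset.sum_congr rfl fun r _ => ?_
    simp only [Pi.sub_apply]
    ring
  have h3 : ∑ e, (d e - ∑ r, θ' r * U e r) ^ 2 * κ e =
      ∑ e, (d e - ∑ r, θ r * U e r) ^ 2 * κ e +
        ∑ e, κ e * (∑ r, (θ' - θ) r * U e r) ^ 2 +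
        2 * (∑ e, κ e * (∑ r, θ r * U e r) * (∑ r, (θ' - θ) r * U e r) -
          ∑ e, κ e * d e * (∑ r, (θ' - θ) r * U e r)) := by
    rw [← Finset.sum_sub_distrib, Finset.mul_sum, ← Finset.sum_add_distrib,
      ← Finset.sum_add_distrib]
    refine Finset.sum_congr rfl fun e _ => ?_
    rw [h2]
    ring
  rw [h3, h1]
  ring

lemma weighted_least_squares {κ : J → ℝ} {U : J → ι → ℝ} (hκ : ∀ e, 0 ≤ κ e)
    (hpos : ∀ v : ι → ℝ, ∑ e, κ e * (∑ r, v r * U e r) ^ 2 ≤ 0 → v = 0) (d : J → ℝ) :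
    ∃ θ : ι → ℝ, (∀ q, ∑ e, κ e * (∑ r, θ r * U e r) * U e q = ∑ e, κ e * d e * U e q) ∧
      (∀ θ' : ι → ℝ, ∑ e, (d e - ∑ r, θ r * U e r) ^ 2 * κ e ≤
        ∑ e, (d e - ∑ r, θ' r * U e r) ^ 2 * κ e) ∧
      ∀ θ' : ι → ℝ, ∑ e, (d e - ∑ r, θ' r * U e r) ^ 2 * κ e ≤
        ∑ e, (d e - ∑ r, θ r * U e r) ^ 2 * κ e → θ' = θ := by
  obtain ⟨θ, hθ⟩ := exists_gram_solution hpos (fun q => ∑ e, κ e * d e * U e q)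
  refine ⟨θ, hθ, fun θ' => ?_, fun θ' h => ?_⟩
  · rw [weighted_loss_eq_add hθ θ']
    exact le_add_of_nonneg_right
      (Finset.sum_nonneg fun e _ => mul_nonneg (hκ e) (sq_nonneg _))
  · rw [weighted_loss_eq_add hθ θ'] at h
    exact sub_eq_zero.1 (hpos _ (by linarith))

lemma gram_row_dual [DecidableEq ι] {κ : J → ℝ} {U : J → ι → ℝ} {d : J → ℝ} {θ g : ι → ℝ}
    {q₀ : ι}
    (hθ : ∀ q, ∑ e, κ e * (∑ r, θ r * U e r) * U e q = ∑ e, κ e * d e * U e q)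
    (hg : ∀ q, ∑ e, κ e * (∑ r, g r * U e r) * U e q = if q = q₀ then 1 else 0) :
    θ q₀ = ∑ e, κ e * (∑ r, g r * U e r) * d e := by
  have h1 := sum_mul_gram_apply κ U θ g
  have h2 := sum_mul_gram_apply κ U g θ
  simp only [hg, mul_ite, mul_one, mul_zero, Finset.sum_ite_eq', Finset.mem_univ, if_true] at h1
  have h3 : ∑ q, g q * ∑ e, κ e * (∑ r, θ r * U e r) * U e q =
      ∑ e, κ e * (∑ r, g r * U e r) * d e := by
    simp only [hθ]
    simp only [Finset.mul_sum, Finset.sum_mul]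
    rw [Finset.sum_comm]
    refine Finset.sum_congr rfl fun e _ => Finset.sum_congr rfl fun q _ => ?_
    ring
  rw [h1, ← h3, h2]
  refine Finset.sum_congr rfl fun e _ => ?_
  ring

lemma norm_sq_le_sum_sq (v : ι → ℝ) : ‖v‖ ^ 2 ≤ ∑ q, v q ^ 2 := by
  have h : ‖v‖ ≤ Real.sqrt (∑ q, v q ^ 2) := by
    refine (pi_norm_le_iff_of_nonneg (Real.sqrt_nonneg _)).2 fun q => ?_
    rw [Real.norm_eq_abs]
    refine Real.abs_le_sqrt ?_
    exact Finset.single_le_sum (f := fun q => v q ^ 2) (fun i _ => sq_nonneg _)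
      (Finset.mem_univ q)
  calc ‖v‖ ^ 2 ≤ Real.sqrt (∑ q, v q ^ 2) ^ 2 := by gcongr
    _ = _ := Real.sq_sqrt (Finset.sum_nonneg fun q _ => sq_nonneg _)

lemma gram_row_norm_le [DecidableEq ι] {κ : J → ℝ} {U : J → ι → ℝ} {g : ι → ℝ} {q₀ : ι} {μ : ℝ}
    (hμ : 0 < μ)
    (hco : ∀ v : ι → ℝ, μ * ∑ q, v q ^ 2 ≤ ∑ e, κ e * (∑ r, v r * U e r) ^ 2)
    (hg : ∀ q, ∑ e, κ e * (∑ r, g r * U e r) * U e q = if q = q₀ then 1 else 0) :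
    ‖g‖ ≤ 1 / μ := by
  have h1 := sum_mul_gram_apply κ U g g
  simp only [hg, mul_ite, mul_one, mul_zero, Finset.sum_ite_eq', Finset.mem_univ, if_true] at h1
  have h2 := hco g
  have h3 : ∑ e, κ e * (∑ r, g r * U e r) ^ 2 = g q₀ := by
    rw [h1]
    refine Finset.sum_congr rfl fun e _ => ?_
    ring
  have h4 := norm_sq_le_sum_sq g
  have h5 : g q₀ ≤ ‖g‖ := (le_abs_self _).trans (norm_le_pi_norm g q₀)
  rw [le_div_iff₀ hμ]
  rcases (norm_nonneg g).eq_or_lt with h | h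
  · rw [← h]; simp
  · have : μ * ‖g‖ ^ 2 ≤ ‖g‖ := by
      calc μ * ‖g‖ ^ 2 ≤ μ * ∑ q, g q ^ 2 := by gcongr
        _ ≤ ‖g‖ := by rw [h3] at h2; linarith
    nlinarith

lemma gram_row_sub_norm_le {κ κ' : J → ℝ} {U U' : J → ι → ℝ} {g g' b : ι → ℝ}
    {μ E : ℝ} (hμ : 0 < μ)
    (hco : ∀ v : ι → ℝ, μ * ∑ q, v q ^ 2 ≤ ∑ e, κ e * (∑ r, v r * U e r) ^ 2)
    (hg : ∀ q, ∑ e, κ e * (∑ r, g r * U e r) * U e q = b q)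
    (hg' : ∀ q, ∑ e, κ' e * (∑ r, g' r * U' e r) * U' e q = b q)
    (hE : ∀ q r, |∑ e, (U' e q * U' e r * κ' e - U e q * U e r * κ e)| ≤ E) :
    ‖g - g'‖ ≤ (Fintype.card ι) ^ 2 * E * ‖g'‖ / μ := by
  set D := g - g' with hD
  have hADD : ∑ e, κ e * (∑ r, D r * U e r) ^ 2 =
      ∑ q, ∑ r, D q * g' r * ∑ e, (U' e q * U' e r * κ' e - U e q * U e r * κ e) := by
    have e1 : ∑ e, κ e * (∑ r, D r * U e r) ^ 2 =
        ∑ q, D q * ∑ e, κ e * (∑ r, D r * U e r) * U e q := by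
      rw [sum_mul_gram_apply]
      refine Finset.sum_congr rfl fun e _ => ?_
      ring
    rw [e1]
    refine Finset.sum_congr rfl fun q _ => ?_
    have e2 : ∑ e, κ e * (∑ r, D r * U e r) * U e q =
        ∑ e, κ' e * (∑ r, g' r * U' e r) * U' e q -
          ∑ e, κ e * (∑ r, g' r * U e r) * U e q := by
      rw [hg', ← hg, ← Finset.sum_sub_distrib]
      refine Finset.sum_congr rfl fun e _ => ?_
      have : ∑ r, D r * U e r = ∑ r, g r * U e r - ∑ r, g' r * U e r := by
        rw [← Finset.sum_sub_distrib]
        refine Finset.sum_congr rfl fun r _ => ?_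
        simp only [hD, Pi.sub_apply]
        ring
      rw [this]
      ring
    have e3 : ∀ e, κ' e * (∑ r, g' r * U' e r) * U' e q - κ e * (∑ r, g' r * U e r) * U e q =
        ∑ r, g' r * (U' e q * U' e r * κ' e - U e q * U e r * κ e) := by
      intro e
      simp only [Finset.mul_sum, Finset.sum_mul]
      rw [← Finset.sum_sub_distrib]
      refine Finset.sum_congr rfl fun r _ => ?_
      ring
    rw [e2, ← Finset.sum_sub_distrib, Finset.sum_congr rfl fun e _ => e3 e, Finset.sum_comm,
      Finset.mul_sum]
    refine Finset.sum_congr rfl fun r _ => ?_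
    rw [← Finset.mul_sum, mul_assoc]
  have hle : μ * ‖D‖ ^ 2 ≤ (Fintype.card ι) ^ 2 * E * ‖g'‖ * ‖D‖ := by
    calc μ * ‖D‖ ^ 2 ≤ μ * ∑ q, D q ^ 2 := by
          gcongr
          exact norm_sq_le_sum_sq D
      _ ≤ _ := hco D
      _ = _ := hADD
      _ ≤ ∑ q : ι, ∑ r : ι, ‖D‖ * ‖g'‖ * E := by
          refine Finset.sum_le_sum fun q _ => Finset.sum_le_sum fun r _ => ?_
          refine (le_abs_self _).trans ?_
          rw [abs_mul, abs_mul]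
          gcongr
          · exact norm_le_pi_norm D q
          · exact norm_le_pi_norm g' r
          · exact hE q r
      _ = _ := by
          simp only [Finset.sum_const, Finset.card_univ, nsmul_eq_mul]
          ring
  rw [le_div_iff₀ hμ]
  rcases (norm_nonneg D).eq_or_lt with h | h
  · rw [← h, zero_mul]
    rcases isEmpty_or_nonempty ι with hι | ⟨⟨q⟩⟩
    · simp
    · have := (abs_nonneg _).trans (hE q q)
      positivity
  · nlinarith

end LeastSquares

section Kernel

lemma exists_bound_lipschitz_mul {P K : ℝ × ℝ → ℝ} {Kmax : ℝ} {Kl : NNReal}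
    (hP : ContDiff ℝ 1 P) (hKlip : LipschitzWith Kl K) (hKabs : ∀ u, |K u| ≤ Kmax)
    (hKsupp : ∀ u, 1 < ‖u‖ → K u = 0) :
    ∃ M L : ℝ, 0 ≤ M ∧ 0 ≤ L ∧ (∀ u, |P u * K u| ≤ M) ∧
      ∀ u v, |P u * K u - P v * K v| ≤ L * ‖u - v‖ := by
  have hcomp : IsCompact (Metric.closedBall (0 : ℝ × ℝ) 1) := isCompact_closedBall 0 1
  obtain ⟨A, hA⟩ := hcomp.exists_bound_of_continuousOn hP.continuous.continuousOn
  obtain ⟨B, hB⟩ := hP.contDiffOn.exists_lipschitzOnWith one_ne_zero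
    (convex_closedBall (0 : ℝ × ℝ) 1) hcomp
  have hmem : ∀ {u : ℝ × ℝ}, ‖u‖ ≤ 1 → u ∈ Metric.closedBall (0 : ℝ × ℝ) 1 := fun h => by
    simpa using h
  have hA0 : 0 ≤ A := (norm_nonneg _).trans (hA 0 (hmem (by simp)))
  have hK0 : 0 ≤ Kmax := (abs_nonneg _).trans (hKabs 0)
  have hKl : ∀ u v, |K u - K v| ≤ Kl * ‖u - v‖ := fun u v => by
    simpa [Real.norm_eq_abs] using hKlip.norm_sub_le u v
  have hone : ∀ u v : ℝ × ℝ, ‖u‖ ≤ 1 → 1 < ‖v‖ →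
      |P u * K u - P v * K v| ≤ (A * Kl + B * Kmax) * ‖u - v‖ := by
    intro u v hu hv
    have h1 : P u * K u - P v * K v = P u * (K u - K v) := by rw [hKsupp v hv]; ring
    rw [h1, abs_mul]
    calc |P u| * |K u - K v| ≤ A * (Kl * ‖u - v‖) := by
          gcongr
          · exact hA u (hmem hu)
          · exact hKl u v
      _ ≤ _ := by
          have : 0 ≤ B * Kmax * ‖u - v‖ := by positivity
          nlinarith
  refine ⟨A * Kmax, A * Kl + B * Kmax, by positivity, by positivity, fun u => ?_, fun u v => ?_⟩
  · rcases le_or_gt ‖u‖ 1 with hu | hu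
    · rw [abs_mul]
      gcongr
      · exact hA u (hmem hu)
      · exact hKabs u
    · rw [hKsupp u hu, mul_zero, abs_zero]
      positivity
  · rcases le_or_gt ‖u‖ 1 with hu | hu <;> rcases le_or_gt ‖v‖ 1 with hv | hv
    · have h1 : P u * K u - P v * K v = P u * (K u - K v) + (P u - P v) * K v := by ring
      have h2 : |P u - P v| ≤ B * ‖u - v‖ := by
        simpa [Real.norm_eq_abs] using hB.norm_sub_le (hmem hu) (hmem hv)
      rw [h1]
      calc _ ≤ |P u| * |K u - K v| + |P u - P v| * |K v| := by
            rw [← abs_mul, ← abs_mul]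
            exact abs_add_le _ _
        _ ≤ A * (Kl * ‖u - v‖) + (B * ‖u - v‖) * Kmax := by
            gcongr
            · exact hA u (hmem hu)
            · exact hKl u v
            · exact hKabs v
        _ = _ := by ring
    · exact hone u v hu hv
    · rw [abs_sub_comm, norm_sub_rev]
      exact hone v u hv hu
    · rw [hKsupp u hu, hKsupp v hv]
      simp only [mul_zero, sub_zero, abs_zero]
      positivity

lemma contDiff_Umon (m : ℕ) (q : MIdx m) : ContDiff ℝ 1 (Umon m q) := by
  unfold Umon
  fun_prop

/-- The multi-index of the constant monomial. -/
def MIdx.zero (m : ℕ) : MIdx m := ⟨(0, 0), by simp⟩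

lemma Umon_zero (m : ℕ) (u : ℝ × ℝ) : Umon m (MIdx.zero m) u = 1 := by
  simp [Umon, MIdx.zero]

end Kernel

section Grid

lemma coeff_eq_zero_of_grid {n : ℕ} {t s : Fin n → ℝ} (ht : Function.Injective t)
    (hs : Function.Injective s) {c : Fin n → Fin n → ℝ}
    (h : ∀ a b, ∑ i, ∑ j, c i j * (t a ^ (i : ℕ) * s b ^ (j : ℕ)) = 0) (i j : Fin n) :
    c i j = 0 := by
  have h1 : ∀ b, (fun i => ∑ j, c i j * s b ^ (j : ℕ)) = 0 := by
    intro b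
    refine Matrix.eq_zero_of_forall_index_sum_pow_mul_eq_zero ht fun a => ?_
    rw [← h a b]
    refine Finset.sum_congr rfl fun i _ => ?_
    rw [Finset.mul_sum]
    refine Finset.sum_congr rfl fun j _ => ?_
    ring
  have h2 : c i = 0 := by
    refine Matrix.eq_zero_of_forall_index_sum_pow_mul_eq_zero hs fun b => ?_
    have := congrFun (h1 b) i
    simp only [Pi.zero_apply] at this
    rw [← this]
    exact Finset.sum_congr rfl fun j _ => mul_comm _ _
  exact congrFun h2 j

lemma eq_zero_of_grid {m : ℕ} {t s : Fin (m + 1) → ℝ} (ht : Function.Injective t)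
    (hs : Function.Injective s) {v : MIdx m → ℝ}
    (h : ∀ a b, ∑ q, v q * Umon m q (t a, s b) = 0) : v = 0 := by
  classical
  let c : Fin (m + 1) → Fin (m + 1) → ℝ := fun i j =>
    if hq : (i : ℕ) + (j : ℕ) ≤ m then
      v ⟨(i, j), hq⟩ / (((i : ℕ).factorial : ℝ) * ((j : ℕ).factorial : ℝ)) else 0
  have hc : ∀ i j, c i j = 0 := by
    refine coeff_eq_zero_of_grid ht hs fun a b => ?_
    rw [← h a b, ← Fintype.sum_prod_type' (f := fun i j => c i j * (t a ^ (i : ℕ) * s b ^ (j : ℕ)))]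
    symm
    refine Finset.sum_of_injOn (fun q : MIdx m => q.1) (fun q _ q' _ hqq => Subtype.ext hqq)
      (fun q _ => Finset.mem_coe.2 (Finset.mem_univ _)) (fun q _ hq => ?_) (fun q _ => ?_)
    · have : ¬ ((q.1 : ℕ) + (q.2 : ℕ) ≤ m) := fun hle =>
        hq ⟨⟨q, hle⟩, Finset.mem_coe.2 (Finset.mem_univ _), rfl⟩
      simp [c, this]
    · have hle : (q.1.1 : ℕ) + (q.1.2 : ℕ) ≤ m := q.2
      simp only [c, dif_pos hle, Umon]
      change v q * _ = v q / _ * _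
      ring
  ext q
  have h0 := hc q.1.1 q.1.2
  have hle : (q.1.1 : ℕ) + (q.1.2 : ℕ) ≤ m := q.2
  simp only [c, dif_pos hle] at h0
  rcases div_eq_zero_iff.1 h0 with h1 | h1
  · exact h1
  · have : (((q.1.1 : ℕ).factorial : ℝ) * ((q.1.2 : ℕ).factorial : ℝ)) ≠ 0 := by positivity
    exact absurd h1 this

/-- Node vectors in `[-1,1]` whose entries are pairwise at distance at least `η`. -/
def separatedNodes (n : ℕ) (η : ℝ) : Set (Fin n → ℝ) :=
  {t | (∀ a, |t a| ≤ 1) ∧ ∀ a b, a ≠ b → η ≤ |t a - t b|}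

lemma isCompact_separatedNodes (n : ℕ) (η : ℝ) : IsCompact (separatedNodes n η) := by
  refine Metric.isCompact_of_isClosed_isBounded ?_ ?_
  · simp only [separatedNodes, Set.ofPred_and, Set.ofPred_forall]
    refine IsClosed.inter (isClosed_iInter fun a => isClosed_le (by fun_prop) (by fun_prop)) ?_
    exact isClosed_iInter fun a => isClosed_iInter fun b => isClosed_iInter fun _ =>
      isClosed_le (by fun_prop) (by fun_prop)
  · refine (Metric.isBounded_closedBall (x := (0 : Fin n → ℝ)) (r := 1)).subset fun t ht => ?_
    rw [mem_closedBall_zero_iff, pi_norm_le_iff_of_nonneg zero_le_one]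
    exact ht.1

lemma exists_grid_lower_bound (m : ℕ) {η : ℝ} (hη : 0 < η) :
    ∃ lam : ℝ, 0 < lam ∧ ∀ t ∈ separatedNodes (m + 1) η, ∀ s ∈ separatedNodes (m + 1) η,
      ∀ v : MIdx m → ℝ,
        lam * ∑ q, v q ^ 2 ≤ ∑ a, ∑ b, (∑ q, v q * Umon m q (t a, s b)) ^ 2 := by
  let G : (Fin (m + 1) → ℝ) × (Fin (m + 1) → ℝ) × (MIdx m → ℝ) → ℝ := fun w =>
    ∑ a, ∑ b, (∑ q, w.2.2 q * Umon m q (w.1 a, w.2.1 b)) ^ 2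
  have hG : Continuous G := by
    refine continuous_finsetSum _ fun a _ => continuous_finsetSum _ fun b _ =>
      Continuous.pow (continuous_finsetSum _ fun q _ => ?_) 2
    refine Continuous.mul (by fun_prop) ((contDiff_Umon m q).continuous.comp ?_)
    fun_prop
  have hinj : ∀ t ∈ separatedNodes (m + 1) η, Function.Injective t := by
    intro t ht a b hab
    by_contra hne
    have := ht.2 a b hne
    rw [hab, sub_self, abs_zero] at this
    linarith
  have hcomp : IsCompact (separatedNodes (m + 1) η ×ˢ separatedNodes (m + 1) η ×ˢ
      {v : MIdx m → ℝ | ∑ q, v q ^ 2 = 1}) := by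
    refine (isCompact_separatedNodes _ _).prod ((isCompact_separatedNodes _ _).prod ?_)
    refine Metric.isCompact_of_isClosed_isBounded (isClosed_eq (by fun_prop) (by fun_prop)) ?_
    refine (Metric.isBounded_closedBall (x := (0 : MIdx m → ℝ)) (r := 1)).subset fun v hv => ?_
    rw [mem_closedBall_zero_iff]
    have h1 := norm_sq_le_sum_sq v
    rw [show ∑ q, v q ^ 2 = 1 from hv] at h1
    nlinarith [norm_nonneg v]
  obtain ⟨lam, hlam, hle⟩ : ∃ lam : ℝ, 0 < lam ∧ ∀ w ∈ separatedNodes (m + 1) η ×ˢ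
      separatedNodes (m + 1) η ×ˢ {v : MIdx m → ℝ | ∑ q, v q ^ 2 = 1}, lam ≤ G w := by
    refine hcomp.exists_forall_le' hG.continuousOn (a := 0) ?_
    rintro ⟨t, s, v⟩ ⟨ht, hs, hv⟩
    have h0 : 0 ≤ G (t, s, v) :=
      Finset.sum_nonneg fun a _ => Finset.sum_nonneg fun b _ => sq_nonneg _
    refine h0.lt_of_ne' fun hzero => ?_
    have hv0 : v = 0 := by
      refine eq_zero_of_grid (hinj t ht) (hinj s hs) fun a b => ?_
      have h1 := (Finset.sum_eq_zero_iff_of_nonneg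
        (fun a _ => Finset.sum_nonneg fun b _ => sq_nonneg _)).1 hzero a (Finset.mem_univ a)
      have h2 := (Finset.sum_eq_zero_iff_of_nonneg
        (fun b _ => sq_nonneg _)).1 h1 b (Finset.mem_univ b)
      exact pow_eq_zero_iff two_ne_zero |>.1 h2
    have hv1 : ∑ q, v q ^ 2 = 1 := hv
    rw [hv0] at hv1
    simp at hv1
  refine ⟨lam, hlam, fun t ht s hs v => ?_⟩
  set S := ∑ q, v q ^ 2 with hS
  have hS0 : 0 ≤ S := Finset.sum_nonneg fun q _ => sq_nonneg _
  rcases hS0.eq_or_lt with h0 | h0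
  · rw [← h0, mul_zero]
    exact Finset.sum_nonneg fun a _ => Finset.sum_nonneg fun b _ => sq_nonneg _
  · have hsq : 0 < Real.sqrt S := Real.sqrt_pos.2 h0
    have hsq2 : Real.sqrt S ^ 2 = S := Real.sq_sqrt hS0
    have h1 := hle (t, s, fun q => v q / Real.sqrt S) ⟨ht, hs, by
      simp only [Set.mem_ofPred_eq, div_pow, hsq2, ← Finset.sum_div]
      exact div_self h0.ne'⟩
    have h2 : G (t, s, fun q => v q / Real.sqrt S) =
        (∑ a, ∑ b, (∑ q, v q * Umon m q (t a, s b)) ^ 2) / S := by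
      simp only [G, div_mul_eq_mul_div, ← Finset.sum_div, div_pow, hsq2]
    rw [h2] at h1
    exact (le_div_iff₀ h0).1 h1

end Grid

section Design

lemma DesignQuantile.exists_cdf {p : ℕ} {f : ℝ → ℝ} {fmin fmax : ℝ} {x : Fin p → ℝ}
    (hx : DesignQuantile f fmin fmax x) :
    ∃ F : ℝ → ℝ, F 0 = 0 ∧ F 1 = 1 ∧
      (∀ s t, 0 ≤ s → s ≤ t → t ≤ 1 →
        fmin * (t - s) ≤ F t - F s ∧ F t - F s ≤ fmax * (t - s)) ∧
      ∀ j, F (x j) = ((j : ℝ) + 1 / 2) / p := by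
  obtain ⟨_, _, ⟨Kf, hlip⟩, hbd, hone, hq⟩ := hx
  refine ⟨fun t => ∫ s in (0 : ℝ)..t, f s, by simp, hone, fun s t hs hst ht => ?_, fun j => ?_⟩
  · have hint : ∀ a b, 0 ≤ a → a ≤ b → b ≤ 1 → IntervalIntegrable f MeasureTheory.volume a b := by
      intro a b ha hab hb
      refine ContinuousOn.intervalIntegrable (hlip.continuousOn.mono ?_)
      rw [Set.uIcc_of_le hab]
      exact Set.Icc_subset_Icc ha hb
    have hmem : ∀ u ∈ Set.Icc s t, u ∈ Set.Icc (0 : ℝ) 1 := fun u hu =>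
      ⟨hs.trans hu.1, hu.2.trans ht⟩
    have hsub : (∫ u in (0 : ℝ)..t, f u) - ∫ u in (0 : ℝ)..s, f u = ∫ u in s..t, f u :=
      intervalIntegral.integral_interval_sub_left (hint 0 t le_rfl (hs.trans hst) ht)
        (hint 0 s le_rfl hs (hst.trans ht))
    simp only [hsub]
    constructor
    · have := intervalIntegral.integral_mono_on (f := fun _ => fmin) hst
        intervalIntegrable_const (hint s t hs hst ht) fun u hu => (hbd u (hmem u hu)).1
      rw [intervalIntegral.integral_const, smul_eq_mul] at this
      linarith
    · have := intervalIntegral.integral_mono_on (g := fun _ => fmax) hst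
        (hint s t hs hst ht) intervalIntegrable_const fun u hu => (hbd u (hmem u hu)).2
      rw [intervalIntegral.integral_const, smul_eq_mul] at this
      linarith
  · change (∫ s in (0 : ℝ)..(x j), f s) = _
    rw [(hq j).2]
    congr 1
    norm_num
    ring

lemma DesignQuantile.lt_of_lt {p : ℕ} {f : ℝ → ℝ} {fmin fmax : ℝ} {x : Fin p → ℝ}
    (hx : DesignQuantile f fmin fmax x) {j k : Fin p} (h : x j < x k) : j < k := by
  obtain ⟨F, -, -, hF, hFx⟩ := hx.exists_cdf
  have hp : (0 : ℝ) < p := by exact_mod_cast j.pos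
  have h1 := (hF _ _ (hx.2.2.2.2.2 j).1.1 h.le (hx.2.2.2.2.2 k).1.2).1
  have h2 : 0 < fmin * (x k - x j) := mul_pos hx.1 (sub_pos.2 h)
  have h3 : F (x j) < F (x k) := by linarith
  rw [hFx, hFx, div_lt_div_iff_of_pos_right hp] at h3
  exact Fin.lt_def.2 (by exact_mod_cast (by linarith : (j : ℝ) < k))

lemma DesignQuantile.exists_points {p : ℕ} {f : ℝ → ℝ} {fmin fmax : ℝ} {x : Fin p → ℝ}
    (hx : DesignQuantile f fmin fmax x) (hp : 0 < p) {α β : ℝ} (hα : 0 ≤ α) (hαβ : α ≤ β)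
    (hβ : β ≤ 1) {n : ℕ} (hn : (n : ℝ) ≤ p * (fmin * (β - α))) :
    ∃ φ : Fin n → Fin p, Function.Injective φ ∧ ∀ i, α ≤ x (φ i) ∧ x (φ i) ≤ β := by
  obtain ⟨F, hF0, hF1, hF, hFx⟩ := hx.exists_cdf
  have hp' : (0 : ℝ) < p := by exact_mod_cast hp
  have hmin := hx.1
  have hmono : ∀ s t, 0 ≤ s → s < t → t ≤ 1 → F s < F t := fun s t h0 hst h1 => by
    have h2 := (hF s t h0 hst.le h1).1
    have h3 : 0 < fmin * (t - s) := mul_pos hmin (sub_pos.2 hst)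
    linarith
  have hFα : 0 ≤ F α := by
    have h1 := (hF 0 α le_rfl hα (hαβ.trans hβ)).1
    have h2 : 0 ≤ fmin * (α - 0) := mul_nonneg hmin.le (by linarith)
    linarith
  have hFβ : F β ≤ 1 := by
    have h1 := (hF β 1 (hα.trans hαβ) hβ le_rfl).1
    have h2 : 0 ≤ fmin * (1 - β) := mul_nonneg hmin.le (by linarith)
    linarith
  have hnF : (n : ℝ) ≤ p * (F β - F α) :=
    hn.trans (mul_le_mul_of_nonneg_left (hF α β hα hαβ hβ).1 hp'.le)
  set j₀ := ⌈(p : ℝ) * F α - 1 / 2⌉₊ with hj₀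
  have hlow : (p : ℝ) * F α - 1 / 2 ≤ j₀ := Nat.le_ceil _
  have hup : (j₀ : ℝ) < p * F α + 1 / 2 := by
    rcases le_or_gt 0 ((p : ℝ) * F α - 1 / 2) with h | h
    · have := Nat.ceil_lt_add_one h
      linarith
    · have h0 : j₀ = 0 := Nat.ceil_eq_zero.2 h.le
      have : 0 ≤ (p : ℝ) * F α := by positivity
      rw [h0, Nat.cast_zero]
      linarith
  have hupi : ∀ i : Fin n, ((j₀ + i : ℕ) : ℝ) + 1 / 2 ≤ p * F β := fun i => by
    have h1 : ((i : ℕ) : ℝ) + 1 ≤ n := by exact_mod_cast i.2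
    push_cast
    linarith
  have hlt : ∀ i : Fin n, j₀ + i < p := fun i => by
    have h1 := hupi i
    have h2 : (p : ℝ) * F β ≤ p * 1 := by gcongr
    have : ((j₀ + i : ℕ) : ℝ) < p := by linarith
    exact_mod_cast this
  refine ⟨fun i => ⟨j₀ + i, hlt i⟩, fun i i' h => ?_, fun i => ⟨?_, ?_⟩⟩
  · have := congrArg Fin.val h
    exact Fin.ext (by simpa using this)
  · by_contra! hcon
    have h1 := hmono _ _ (hx.2.2.2.2.2 _).1.1 hcon (hαβ.trans hβ)
    rw [hFx, div_lt_iff₀ hp'] at h1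
    push_cast at h1
    have : (0 : ℝ) ≤ (i : ℕ) := Nat.cast_nonneg _
    linarith
  · by_contra! hcon
    have h1 := hmono _ _ (hα.trans hαβ) hcon (hx.2.2.2.2.2 _).1.2
    rw [hFx, lt_div_iff₀ hp'] at h1
    have h2 := hupi i
    linarith

lemma DesignQuantile.card_near_le {p : ℕ} {f : ℝ → ℝ} {fmin fmax : ℝ} {x : Fin p → ℝ}
    (hx : DesignQuantile f fmin fmax x) (s : ℝ) {h : ℝ} (hh : 0 ≤ h) :
    ((Finset.univ.filter fun j => |x j - s| ≤ h).card : ℝ) ≤ 2 * fmax * (p * h) + 1 := by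
  obtain ⟨F, -, -, hF, hFx⟩ := hx.exists_cdf
  have hmax : 0 ≤ fmax := hx.1.le.trans hx.2.1
  set S := Finset.univ.filter fun j => |x j - s| ≤ h with hS
  rcases S.eq_empty_or_nonempty with hemp | hne
  · rw [hemp, Finset.card_empty, Nat.cast_zero]
    positivity
  · set a := S.min' hne
    set b := S.max' hne
    have ha : |x a - s| ≤ h := (Finset.mem_filter.1 (S.min'_mem hne)).2
    have hb : |x b - s| ≤ h := (Finset.mem_filter.1 (S.max'_mem hne)).2
    have hab : a ≤ b := S.min'_le _ (S.max'_mem hne)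
    have hp : (0 : ℝ) < p := by exact_mod_cast a.pos
    have hxab : x a ≤ x b := by
      by_contra! hcon
      exact absurd (hx.lt_of_lt hcon) (not_lt.2 hab)
    have hsub : S ⊆ Finset.Icc a b := fun j hj =>
      Finset.mem_Icc.2 ⟨S.min'_le j hj, S.le_max' j hj⟩
    have hcard : S.card + (a : ℕ) ≤ b + 1 := by
      have h1 := Finset.card_le_card hsub
      rw [Fin.card_Icc] at h1
      have h2 : (a : ℕ) ≤ b := hab
      omega
    have hcard' : (S.card : ℝ) + (a : ℕ) ≤ (b : ℕ) + 1 := by exact_mod_cast hcard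
    have h1 := (hF _ _ (hx.2.2.2.2.2 a).1.1 hxab (hx.2.2.2.2.2 b).1.2).2
    have h2 : x b - x a ≤ 2 * h := by
      rw [abs_le] at ha hb
      linarith [ha.1, hb.2]
    have h3 : F (x b) - F (x a) ≤ fmax * (2 * h) := h1.trans (by gcongr)
    rw [hFx, hFx, ← sub_div, div_le_iff₀ hp] at h3
    linarith

lemma DesignQuantile.exists_node_families {p : ℕ} {f : ℝ → ℝ} {fmin fmax : ℝ} {x : Fin p → ℝ}
    (hx : DesignQuantile f fmin fmax x) (hp : 0 < p) (m : ℕ) {α ℓ : ℝ} (hℓ : 0 ≤ ℓ)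
    (hα : 0 ≤ α) (hα1 : α + (2 * m + 1) * ℓ ≤ 1) {n : ℕ} (hn : (n : ℝ) ≤ p * (fmin * ℓ)) :
    ∃ ψ : Fin n × Fin (m + 1) → Fin p,
      (∀ i i' a, ψ (i, a) = ψ (i', a) → i = i') ∧
      (∀ e, α ≤ x (ψ e) ∧ x (ψ e) ≤ α + (2 * m + 1) * ℓ) ∧
      ∀ e e' : Fin n × Fin (m + 1), e.2 ≠ e'.2 → ℓ ≤ |x (ψ e) - x (ψ e')| := by
  have ham : ∀ a : Fin (m + 1), (a : ℕ) ≤ m := fun a => Nat.lt_succ_iff.1 a.2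
  have hex : ∀ a : Fin (m + 1), ∃ φ : Fin n → Fin p, Function.Injective φ ∧
      ∀ i, α + 2 * (a : ℕ) * ℓ ≤ x (φ i) ∧ x (φ i) ≤ α + (2 * (a : ℕ) + 1) * ℓ := by
    intro a
    refine hx.exists_points hp (by positivity) (by linarith) ?_ ?_
    · have : (2 * ((a : ℕ) : ℝ) + 1) * ℓ ≤ (2 * m + 1) * ℓ := by
        gcongr
        exact ham a
      linarith
    · convert hn using 3
      ring
  choose φ hinj hφ using hex
  have hlt : ∀ e e' : Fin n × Fin (m + 1), e.2 < e'.2 →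
      ℓ ≤ x (φ e'.2 e'.1) - x (φ e.2 e.1) := by
    intro e e' h
    have h1 : ((e.2 : ℕ) : ℝ) + 1 ≤ (e'.2 : ℕ) := by exact_mod_cast h
    have h2 := (hφ e.2 e.1).2
    have h3 := (hφ e'.2 e'.1).1
    nlinarith
  refine ⟨fun e => φ e.2 e.1, fun i i' a h => hinj a h, fun e => ⟨?_, ?_⟩, fun e e' h => ?_⟩
  · have h1 := (hφ e.2 e.1).1
    have : 0 ≤ 2 * ((e.2 : ℕ) : ℝ) * ℓ := by positivity
    linarith
  · have h1 := (hφ e.2 e.1).2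
    have : (2 * ((e.2 : ℕ) : ℝ) + 1) * ℓ ≤ (2 * m + 1) * ℓ := by
      gcongr
      exact ham e.2
    linarith
  · rcases lt_or_gt_of_ne h with h' | h'
    · rw [abs_sub_comm]
      exact (hlt e e' h').trans (le_abs_self _)
    · exact (hlt e' e h').trans (le_abs_self _)

lemma exists_local_rectangle {z : ℝ × ℝ} (hz : z ∈ upperT) {h δ : ℝ} (hh : 0 < h)
    (hh' : h ≤ 1 / 4) (hδ : 0 < δ) (hδ' : 3 * δ ≤ 1) :
    ∃ a₁ a₂ : ℝ, (-(3 * δ) ≤ a₁ ∧ a₁ + δ ≤ 3 * δ) ∧ (-(3 * δ) ≤ a₂ ∧ a₂ + δ ≤ 3 * δ) ∧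
      (0 ≤ z.1 + h * a₁ ∧ z.1 + h * (a₁ + δ) ≤ 1) ∧
      (0 ≤ z.2 + h * a₂ ∧ z.2 + h * (a₂ + δ) ≤ 1) ∧
      z.1 + h * (a₁ + δ) < z.2 + h * a₂ := by
  obtain ⟨⟨h1, h2⟩, ⟨h3, h4⟩, h5⟩ := hz
  have hhδ : 0 < h * δ := mul_pos hh hδ
  have hhδ' : 3 * (h * δ) ≤ 1 / 4 := by nlinarith
  rcases le_or_gt z.2 (3 / 4) with hc | hc
  · exact ⟨0, 2 * δ, ⟨by linarith, by linarith⟩, ⟨by linarith, by linarith⟩,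
      ⟨by linarith, by linarith⟩, ⟨by linarith, by linarith⟩, by linarith⟩
  rcases le_or_gt (1 / 4) z.1 with hc' | hc'
  · exact ⟨-(3 * δ), -δ, ⟨by linarith, by linarith⟩, ⟨by linarith, by linarith⟩,
      ⟨by linarith, by linarith⟩, ⟨by linarith, by linarith⟩, by linarith⟩
  · exact ⟨0, -δ, ⟨by linarith, by linarith⟩, ⟨by linarith, by linarith⟩,
      ⟨by linarith, by linarith⟩, ⟨by linarith, by linarith⟩, by linarith⟩

/-- The pair `((x_j - z₁)/h, (x_k - z₂)/h)` of rescaled design points. -/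
noncomputable def scaledPair {p : ℕ} (x : Fin p → ℝ) (h : ℝ) (z : ℝ × ℝ) (e : Fin p × Fin p) :
    ℝ × ℝ :=
  ((x e.1 - z.1) / h, (x e.2 - z.2) / h)

/-- The kernel weight of a design pair, set to zero off the strict upper triangle. -/
noncomputable def pairKernel {p : ℕ} (K : ℝ × ℝ → ℝ) (x : Fin p → ℝ) (h : ℝ) (z : ℝ × ℝ)
    (e : Fin p × Fin p) : ℝ :=
  if e.1 < e.2 then K (scaledPair x h z e) else 0

lemma pairKernel_nonneg {p : ℕ} {K : ℝ × ℝ → ℝ} (hK0 : ∀ u, 0 ≤ K u) (x : Fin p → ℝ) (h : ℝ)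
    (z : ℝ × ℝ) (e : Fin p × Fin p) : 0 ≤ pairKernel K x h z e := by
  unfold pairKernel
  split_ifs
  exacts [hK0 _, le_rfl]

lemma DesignQuantile.gram_coercive {p : ℕ} {f : ℝ → ℝ} {fmin fmax : ℝ} {x : Fin p → ℝ}
    (hx : DesignQuantile f fmin fmax x) (hp : 0 < p) {m : ℕ} {K : ℝ × ℝ → ℝ}
    {δ η Kmin lam h : ℝ} (hK0 : ∀ u, 0 ≤ K u) (hKmin : 0 ≤ Kmin)
    (hKlow : ∀ u : ℝ × ℝ, |u.1| ≤ 3 * δ → |u.2| ≤ 3 * δ → Kmin ≤ K u)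
    (hδ : 0 < δ) (hδ' : 3 * δ ≤ 1) (hη : (2 * m + 1) * η = δ)
    (hlam : ∀ t ∈ separatedNodes (m + 1) η, ∀ s ∈ separatedNodes (m + 1) η, ∀ v : MIdx m → ℝ,
      lam * ∑ q, v q ^ 2 ≤ ∑ a, ∑ b, (∑ q, v q * Umon m q (t a, s b)) ^ 2)
    (hh : 0 < h) (hh' : h ≤ 1 / 4) {n : ℕ} (hn : (n : ℝ) ≤ p * (fmin * (h * η)))
    {z : ℝ × ℝ} (hz : z ∈ upperT) (v : MIdx m → ℝ) :
    Kmin * lam * (n : ℝ) ^ 2 * ∑ q, v q ^ 2 ≤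
      ∑ e, pairKernel K x h z e * (∑ r, v r * Umon m r (scaledPair x h z e)) ^ 2 := by
  obtain ⟨a₁, a₂, ⟨ha₁, ha₁'⟩, ⟨ha₂, ha₂'⟩, ⟨hb₁, hb₁'⟩, ⟨hb₂, hb₂'⟩, hlt⟩ :=
    exists_local_rectangle hz hh hh' hδ hδ'
  have hη0 : 0 < η := by
    by_contra! hcon
    have : (2 * (m : ℝ) + 1) * η ≤ 0 := mul_nonpos_of_nonneg_of_nonpos (by positivity) hcon
    linarith
  have hlen : (2 * (m : ℝ) + 1) * (h * η) = h * δ := by rw [← hη]; ring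
  have hℓ : 0 < h * η := mul_pos hh hη0
  obtain ⟨ψ₁, hi₁, hr₁, hs₁⟩ := hx.exists_node_families hp m hℓ.le hb₁
    (by rw [hlen]; linarith) hn
  obtain ⟨ψ₂, hi₂, hr₂, hs₂⟩ := hx.exists_node_families hp m hℓ.le hb₂
    (by rw [hlen]; linarith) hn
  rw [hlen] at hr₁ hr₂
  have hinj : ∀ ψ : Fin n × Fin (m + 1) → Fin p,
      (∀ i i' a, ψ (i, a) = ψ (i', a) → i = i') →
      (∀ e e' : Fin n × Fin (m + 1), e.2 ≠ e'.2 → h * η ≤ |x (ψ e) - x (ψ e')|) →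
      Function.Injective ψ := by
    rintro ψ hi hs ⟨i, a⟩ ⟨i', a'⟩ he
    have haa : a = a' := by
      by_contra hne
      have := hs (i, a) (i', a') hne
      rw [he, sub_self, abs_zero] at this
      linarith
    subst haa
    rw [hi i i' a he]
  have hbox : ∀ {X w a : ℝ}, -(3 * δ) ≤ a → a + δ ≤ 3 * δ → w + h * a ≤ X →
      X ≤ w + h * a + h * δ → |(X - w) / h| ≤ 3 * δ := by
    intro X w a h1 h2 h3 h4
    rw [abs_le, le_div_iff₀ hh, div_le_iff₀ hh]
    constructor <;> nlinarith
  have hnode : ∀ (ψ : Fin n × Fin (m + 1) → Fin p) (w : ℝ) (i : Fin n),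
      (∀ e, |(x (ψ e) - w) / h| ≤ 3 * δ) →
      (∀ e e' : Fin n × Fin (m + 1), e.2 ≠ e'.2 → h * η ≤ |x (ψ e) - x (ψ e')|) →
      (fun a => (x (ψ (i, a)) - w) / h) ∈ separatedNodes (m + 1) η := by
    intro ψ w i hb hs
    refine ⟨fun a => (hb _).trans hδ', fun a b hab => ?_⟩
    have h1 := hs (i, a) (i, b) hab
    have h2 : (x (ψ (i, a)) - w) / h - (x (ψ (i, b)) - w) / h =
        (x (ψ (i, a)) - x (ψ (i, b))) / h := by ring
    rw [h2, abs_div, abs_of_pos hh, le_div_iff₀ hh]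
    linarith
  have hbox₁ : ∀ e, |(x (ψ₁ e) - z.1) / h| ≤ 3 * δ := fun e =>
    hbox ha₁ ha₁' (hr₁ e).1 (hr₁ e).2
  have hbox₂ : ∀ e, |(x (ψ₂ e) - z.2) / h| ≤ 3 * δ := fun e =>
    hbox ha₂ ha₂' (hr₂ e).1 (hr₂ e).2
  have hterm : ∀ e : (Fin n × Fin (m + 1)) × (Fin n × Fin (m + 1)),
      Kmin * (∑ r, v r * Umon m r ((x (ψ₁ e.1) - z.1) / h, (x (ψ₂ e.2) - z.2) / h)) ^ 2 ≤
      pairKernel K x h z (Prod.map ψ₁ ψ₂ e) *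
        (∑ r, v r * Umon m r (scaledPair x h z (Prod.map ψ₁ ψ₂ e))) ^ 2 := by
    rintro ⟨e, e'⟩
    have h1 : ψ₁ e < ψ₂ e' := hx.lt_of_lt (by linarith [(hr₁ e).2, (hr₂ e').1])
    simp only [pairKernel, scaledPair, Prod.map_apply, if_pos h1]
    gcongr
    exact hKlow _ (hbox₁ e) (hbox₂ e')
  have hsum := sum_comp_le_sum_of_injective ((hinj ψ₁ hi₁ hs₁).prodMap (hinj ψ₂ hi₂ hs₂))
    (F := fun e => pairKernel K x h z e * (∑ r, v r * Umon m r (scaledPair x h z e)) ^ 2)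
    fun e => mul_nonneg (pairKernel_nonneg hK0 x h z e) (sq_nonneg _)
  refine le_trans ?_ ((Finset.sum_le_sum fun e _ => hterm e).trans hsum)
  rw [← Finset.mul_sum, mul_assoc, mul_assoc]
  refine mul_le_mul_of_nonneg_left ?_ hKmin
  have hgrid : ∀ i i' : Fin n, lam * ∑ q, v q ^ 2 ≤ ∑ a, ∑ b, (∑ r, v r *
      Umon m r ((x (ψ₁ (i, a)) - z.1) / h, (x (ψ₂ (i', b)) - z.2) / h)) ^ 2 := fun i i' =>
    hlam _ (hnode ψ₁ z.1 i hbox₁ hs₁) _ (hnode ψ₂ z.2 i' hbox₂ hs₂) v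
  calc lam * ((n : ℝ) ^ 2 * ∑ q, v q ^ 2)
      = ∑ _i : Fin n, ∑ _i' : Fin n, lam * ∑ q, v q ^ 2 := by
        simp only [Finset.sum_const, Finset.card_univ, Fintype.card_fin, nsmul_eq_mul]
        ring
    _ ≤ ∑ i : Fin n, ∑ i' : Fin n, ∑ a, ∑ b, (∑ r, v r *
          Umon m r ((x (ψ₁ (i, a)) - z.1) / h, (x (ψ₂ (i', b)) - z.2) / h)) ^ 2 :=
        Finset.sum_le_sum fun i _ => Finset.sum_le_sum fun i' _ => hgrid i i'
    _ = _ := by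
        simp only [Fintype.sum_prod_type]
        refine Finset.sum_congr rfl fun i _ => ?_
        rw [Finset.sum_comm]

end Design

section Perturbation

lemma DesignQuantile.sum_abs_sub_le {p : ℕ} {f : ℝ → ℝ} {fmin fmax : ℝ} {x : Fin p → ℝ}
    (hx : DesignQuantile f fmin fmax x) {H : ℝ × ℝ → ℝ} {L h : ℝ} (hL : 0 ≤ L) (hh : 0 < h)
    (hlip : ∀ u v, |H u - H v| ≤ L * ‖u - v‖) (hsupp : ∀ u, 1 < ‖u‖ → H u = 0) {t : ℝ}
    (ht : 0 ≤ t) {z z' : ℝ × ℝ} (hzz : ∀ e, ‖scaledPair x h z' e - scaledPair x h z e‖ ≤ t) :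
    ∑ e, |H (scaledPair x h z' e) - H (scaledPair x h z e)| ≤
      2 * L * t * (2 * fmax * (p * h) + 1) ^ 2 := by
  classical
  have hcount : ∀ w : ℝ × ℝ, ∑ e, (if ‖scaledPair x h w e‖ ≤ 1 then (1 : ℝ) else 0) ≤
      (2 * fmax * (p * h) + 1) ^ 2 := by
    intro w
    rw [Finset.sum_boole]
    have hsub : (Finset.univ.filter fun e => ‖scaledPair x h w e‖ ≤ 1) ⊆
        (Finset.univ.filter fun j => |x j - w.1| ≤ h) ×ˢ
          (Finset.univ.filter fun j => |x j - w.2| ≤ h) := by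
      intro e he
      have he' := (Finset.mem_filter.1 he).2
      rw [scaledPair, Prod.norm_def, max_le_iff] at he'
      simp only [Real.norm_eq_abs, abs_div, abs_of_pos hh, div_le_one hh] at he'
      simpa using he'
    calc (((Finset.univ.filter fun e => ‖scaledPair x h w e‖ ≤ 1).card : ℕ) : ℝ)
        ≤ (((Finset.univ.filter fun j => |x j - w.1| ≤ h) ×ˢ
            (Finset.univ.filter fun j => |x j - w.2| ≤ h)).card : ℕ) := by
          exact_mod_cast Finset.card_le_card hsub
      _ = ((Finset.univ.filter fun j => |x j - w.1| ≤ h).card : ℝ) *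
            ((Finset.univ.filter fun j => |x j - w.2| ≤ h).card : ℝ) := by
          rw [Finset.card_product, Nat.cast_mul]
      _ ≤ (2 * fmax * (p * h) + 1) * (2 * fmax * (p * h) + 1) :=
          mul_le_mul (hx.card_near_le _ hh.le) (hx.card_near_le _ hh.le) (Nat.cast_nonneg _)
            ((Nat.cast_nonneg _).trans (hx.card_near_le w.1 hh.le))
      _ = _ := by ring
  have hterm : ∀ e, |H (scaledPair x h z' e) - H (scaledPair x h z e)| ≤
      L * t * ((if ‖scaledPair x h z' e‖ ≤ 1 then 1 else 0) +
        if ‖scaledPair x h z e‖ ≤ 1 then 1 else 0) := by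
    intro e
    have h1 : |H (scaledPair x h z' e) - H (scaledPair x h z e)| ≤ L * t :=
      (hlip _ _).trans (mul_le_mul_of_nonneg_left (hzz e) hL)
    have h2 : 0 ≤ L * t := mul_nonneg hL ht
    split_ifs with ha hb hb
    · linarith
    · linarith
    · linarith
    · rw [hsupp _ (not_le.1 ha), hsupp _ (not_le.1 hb)]
      simp
  calc _ ≤ ∑ e, L * t * ((if ‖scaledPair x h z' e‖ ≤ 1 then (1 : ℝ) else 0) +
        if ‖scaledPair x h z e‖ ≤ 1 then 1 else 0) := Finset.sum_le_sum fun e _ => hterm e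
    _ = L * t * (∑ e, (if ‖scaledPair x h z' e‖ ≤ 1 then (1 : ℝ) else 0) +
        ∑ e, if ‖scaledPair x h z e‖ ≤ 1 then (1 : ℝ) else 0) := by
          rw [← Finset.sum_add_distrib, Finset.mul_sum]
    _ ≤ L * t * ((2 * fmax * (p * h) + 1) ^ 2 + (2 * fmax * (p * h) + 1) ^ 2) := by
          gcongr
          · exact hcount z'
          · exact hcount z
    _ = _ := by ring

lemma norm_scaledPair_sub {p : ℕ} (x : Fin p → ℝ) {h : ℝ} (hh : 0 < h) (z z' : ℝ × ℝ)
    (e : Fin p × Fin p) :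
    ‖scaledPair x h z e - scaledPair x h z' e‖ = max |z.1 - z'.1| |z.2 - z'.2| / h := by
  have h1 : ∀ a b c : ℝ, |(a - b) / h - (a - c) / h| = |b - c| / h := fun a b c => by
    rw [show (a - b) / h - (a - c) / h = (c - b) / h by ring, abs_div, abs_of_pos hh,
      abs_sub_comm]
  simp only [scaledPair, Prod.norm_def, Prod.fst_sub, Prod.snd_sub, Real.norm_eq_abs, h1]
  exact (max_div_div_right hh.le _ _)

lemma abs_sum_mul_le {ι : Type*} [Fintype ι] {g G : ι → ℝ} {A B : ℝ} (hg : ‖g‖ ≤ A)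
    (hG : ∀ q, |G q| ≤ B) : |∑ q, g q * G q| ≤ Fintype.card ι * (A * B) := by
  calc _ ≤ ∑ q, |g q * G q| := Finset.abs_sum_le_sum_abs _ _
    _ ≤ ∑ _q : ι, A * B := by
        refine Finset.sum_le_sum fun q _ => ?_
        rw [abs_mul]
        exact mul_le_mul ((norm_le_pi_norm g q).trans hg) (hG q) (abs_nonneg _)
          ((norm_nonneg g).trans hg)
    _ = _ := by rw [Finset.sum_const, Finset.card_univ, nsmul_eq_mul]

lemma exists_moment_bounds {m : ℕ} {K : ℝ × ℝ → ℝ} {Kmax : ℝ} {Kl : NNReal}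
    (hKlip : LipschitzWith Kl K) (hKabs : ∀ u, |K u| ≤ Kmax)
    (hKsupp : ∀ u, 1 < ‖u‖ → K u = 0) :
    ∃ M L : ℝ, 0 ≤ M ∧ 0 ≤ L ∧
      (∀ q u, |Umon m q u * K u| ≤ M) ∧
      (∀ q u v, |Umon m q u * K u - Umon m q v * K v| ≤ L * ‖u - v‖) ∧
      ∀ q r u v, |Umon m q u * Umon m r u * K u - Umon m q v * Umon m r v * K v| ≤
        L * ‖u - v‖ := by
  have hex := fun q r : MIdx m =>
    exists_bound_lipschitz_mul ((contDiff_Umon m q).mul (contDiff_Umon m r)) hKlip hKabs hKsupp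
  choose M L hM0 hL0 hM hL using hex
  have hMle : ∀ q r, M q r ≤ ∑ q, ∑ r, M q r := fun q r =>
    (Finset.single_le_sum (f := fun r => M q r) (fun r _ => hM0 q r) (Finset.mem_univ r)).trans
      (Finset.single_le_sum (f := fun q => ∑ r, M q r)
        (fun q _ => Finset.sum_nonneg fun r _ => hM0 q r) (Finset.mem_univ q))
  have hLle : ∀ q r, L q r ≤ ∑ q, ∑ r, L q r := fun q r =>
    (Finset.single_le_sum (f := fun r => L q r) (fun r _ => hL0 q r) (Finset.mem_univ r)).trans
      (Finset.single_le_sum (f := fun q => ∑ r, L q r)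
        (fun q _ => Finset.sum_nonneg fun r _ => hL0 q r) (Finset.mem_univ q))
  have hlip : ∀ q r u v, |Umon m q u * Umon m r u * K u - Umon m q v * Umon m r v * K v| ≤
      (∑ q, ∑ r, L q r) * ‖u - v‖ := fun q r u v =>
    (hL q r u v).trans (mul_le_mul_of_nonneg_right (hLle q r) (norm_nonneg _))
  refine ⟨∑ q, ∑ r, M q r, ∑ q, ∑ r, L q r,
    Finset.sum_nonneg fun q _ => Finset.sum_nonneg fun r _ => hM0 q r,
    Finset.sum_nonneg fun q _ => Finset.sum_nonneg fun r _ => hL0 q r,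
    fun q u => ?_, fun q u v => ?_, hlip⟩
  · simpa [Umon_zero] using (hM q (MIdx.zero m) u).trans (hMle q (MIdx.zero m))
  · simpa [Umon_zero] using hlip q (MIdx.zero m) u v

end Perturbation

section Weights

/-- The linear weights of the local polynomial estimator whose Gram system at `z` has the
solution `g z`. -/
noncomputable def lpWeight {p : ℕ} (m : ℕ) (K : ℝ × ℝ → ℝ) (x : Fin p → ℝ) (h : ℝ)
    (g : ℝ × ℝ → MIdx m → ℝ) (z : ℝ × ℝ) (j k : Fin p) : ℝ :=
  K (scaledPair x h z (j, k)) * ∑ r, g z r * Umon m r (scaledPair x h z (j, k))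

variable {p m : ℕ} {K : ℝ × ℝ → ℝ} {x : Fin p → ℝ} {h : ℝ} {g : ℝ × ℝ → MIdx m → ℝ}

lemma pairSum_lpWeight_mul (z : ℝ × ℝ) (d : Fin p → Fin p → ℝ) :
    pairSum (fun j k => lpWeight m K x h g z j k * d j k) =
      ∑ e, pairKernel K x h z e * (∑ r, g z r * Umon m r (scaledPair x h z e)) * d e.1 e.2 := by
  rw [pairSum_eq_sum_prod]
  refine Finset.sum_congr rfl fun e _ => ?_
  simp only [pairKernel, lpWeight]
  split_ifs <;> simp

lemma lpLoss_eq (z : ℝ × ℝ) (d : Fin p → Fin p → ℝ) (θ : MIdx m → ℝ) :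
    lpLoss m K x h z d θ =
      ∑ e, (d e.1 e.2 - ∑ r, θ r * Umon m r (scaledPair x h z e)) ^ 2 * pairKernel K x h z e := by
  rw [lpLoss, pairSum_eq_sum_prod]
  refine Finset.sum_congr rfl fun e _ => ?_
  simp only [pairKernel, scaledPair]
  split_ifs <;> simp

lemma lpLoss_minimizer {z : ℝ × ℝ} (hK0 : ∀ u, 0 ≤ K u)
    (hpos : ∀ v : MIdx m → ℝ,
      ∑ e, pairKernel K x h z e * (∑ r, v r * Umon m r (scaledPair x h z e)) ^ 2 ≤ 0 → v = 0)
    (hg : ∀ q, ∑ e, pairKernel K x h z e * (∑ r, g z r * Umon m r (scaledPair x h z e)) *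
      Umon m q (scaledPair x h z e) = if q = MIdx.zero m then 1 else 0)
    (d : Fin p → Fin p → ℝ) :
    (∃! θ : MIdx m → ℝ, ∀ θ', lpLoss m K x h z d θ ≤ lpLoss m K x h z d θ') ∧
      ∀ θ : MIdx m → ℝ, (∀ θ', lpLoss m K x h z d θ ≤ lpLoss m K x h z d θ') →
        θ (MIdx.zero m) = pairSum fun j k => lpWeight m K x h g z j k * d j k := by
  obtain ⟨θ, hθ, hmin, huniq⟩ := weighted_least_squares
    (U := fun e r => Umon m r (scaledPair x h z e)) (pairKernel_nonneg hK0 x h z) hpos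
    (fun e => d e.1 e.2)
  simp only [lpLoss_eq]
  refine ⟨⟨θ, hmin, fun θ' hθ' => huniq θ' (hθ' θ)⟩, fun θ' hθ' => ?_⟩
  rw [huniq θ' (hθ' θ), pairSum_lpWeight_mul]
  exact gram_row_dual hθ hg

lemma lpWeight_reproduces {z : ℝ × ℝ} (hh : h ≠ 0)
    (hg : ∀ q, ∑ e, pairKernel K x h z e * (∑ r, g z r * Umon m r (scaledPair x h z e)) *
      Umon m q (scaledPair x h z e) = if q = MIdx.zero m then 1 else 0) :
    pairSum (lpWeight m K x h g z) = 1 ∧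
      ∀ r₁ r₂ : ℕ, 0 < r₁ + r₂ → r₁ + r₂ ≤ m →
        pairSum (fun j k =>
          (x j - z.1) ^ r₁ * (x k - z.2) ^ r₂ * lpWeight m K x h g z j k) = 0 := by
  constructor
  · have h1 := pairSum_lpWeight_mul (m := m) (K := K) (x := x) (h := h) (g := g) z
      fun _ _ => 1
    have h2 := hg (MIdx.zero m)
    simp only [mul_one] at h1
    simp only [Umon_zero, mul_one, if_true] at h2
    exact h1.trans h2
  · intro r₁ r₂ hr hrm
    let q : MIdx m := ⟨(⟨r₁, by omega⟩, ⟨r₂, by omega⟩), hrm⟩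
    have hq : q ≠ MIdx.zero m := by
      intro hq
      have h1 : r₁ = 0 := congrArg (fun q : MIdx m => (q.1.1 : ℕ)) hq
      have h2 : r₂ = 0 := congrArg (fun q : MIdx m => (q.1.2 : ℕ)) hq
      omega
    have h1 := pairSum_lpWeight_mul (m := m) (K := K) (x := x) (h := h) (g := g) z
      fun j k => (x j - z.1) ^ r₁ * (x k - z.2) ^ r₂
    have h2 := hg q
    rw [if_neg hq] at h2
    have h3 : ∀ e : Fin p × Fin p, (x e.1 - z.1) ^ r₁ * (x e.2 - z.2) ^ r₂ =
        Umon m q (scaledPair x h z e) * (h ^ r₁ * h ^ r₂ * (r₁.factorial * r₂.factorial)) := by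
      intro e
      have hf : ((r₁.factorial : ℝ) * (r₂.factorial : ℝ)) ≠ 0 := by positivity
      simp only [Umon, scaledPair, q, div_pow]
      field_simp
    have h4 : ∑ e, pairKernel K x h z e * (∑ r, g z r * Umon m r (scaledPair x h z e)) *
        ((x e.1 - z.1) ^ r₁ * (x e.2 - z.2) ^ r₂) = 0 := by
      simp only [h3]
      simp only [← mul_assoc, ← Finset.sum_mul]
      rw [h2]
      ring
    rw [← h4, ← h1]
    congr 1
    ext j k
    ring

lemma lpWeight_eq_zero {z : ℝ × ℝ} (hh : 0 < h) (hKsupp : ∀ u, 1 < ‖u‖ → K u = 0) {j k : Fin p}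
    (hjk : h < max |x j - z.1| |x k - z.2|) : lpWeight m K x h g z j k = 0 := by
  have h1 : 1 < ‖scaledPair x h z (j, k)‖ := by
    simp only [scaledPair, Prod.norm_def, Real.norm_eq_abs, abs_div, abs_of_pos hh]
    rwa [max_div_div_right hh.le, one_lt_div hh]
  rw [lpWeight, hKsupp _ h1, zero_mul]

lemma lpWeight_eq_sum (z : ℝ × ℝ) (j k : Fin p) : lpWeight m K x h g z j k =
    ∑ r, g z r * (Umon m r (scaledPair x h z (j, k)) * K (scaledPair x h z (j, k))) := by
  rw [lpWeight, Finset.mul_sum]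
  exact Finset.sum_congr rfl fun r _ => by ring

lemma abs_lpWeight_sub_le {M L A B t : ℝ} (hh : 0 < h)
    (hM : ∀ q u, |Umon m q u * K u| ≤ M)
    (hL : ∀ q u v, |Umon m q u * K u - Umon m q v * K v| ≤ L * ‖u - v‖)
    {z z' : ℝ × ℝ} (ht : max |z.1 - z'.1| |z.2 - z'.2| / h = t)
    (hA : ‖g z - g z'‖ ≤ A) (hB : ‖g z'‖ ≤ B) (j k : Fin p) :
    |lpWeight m K x h g z j k - lpWeight m K x h g z' j k| ≤
      Fintype.card (MIdx m) * (A * M + B * (L * t)) := by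
  have h1 : lpWeight m K x h g z j k - lpWeight m K x h g z' j k =
      ∑ r, (g z - g z') r *
        (Umon m r (scaledPair x h z (j, k)) * K (scaledPair x h z (j, k))) +
      ∑ r, g z' r * (Umon m r (scaledPair x h z (j, k)) * K (scaledPair x h z (j, k)) -
        Umon m r (scaledPair x h z' (j, k)) * K (scaledPair x h z' (j, k))) := by
    rw [lpWeight_eq_sum, lpWeight_eq_sum, ← Finset.sum_sub_distrib, ← Finset.sum_add_distrib]
    refine Finset.sum_congr rfl fun r _ => ?_
    simp only [Pi.sub_apply]
    ring
  rw [h1, mul_add]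
  refine (abs_add_le _ _).trans (add_le_add (abs_sum_mul_le hA fun r => hM r _)
    (abs_sum_mul_le hB fun r => ?_))
  refine (hL r _ _).trans ?_
  rw [norm_scaledPair_sub x hh, ht]

lemma abs_sum_gram_sub_le {f : ℝ → ℝ} {fmin fmax : ℝ} (hx : DesignQuantile f fmin fmax x)
    {L t : ℝ} (hh : 0 < h) (hL0 : 0 ≤ L)
    (hL : ∀ q r u v, |Umon m q u * Umon m r u * K u - Umon m q v * Umon m r v * K v| ≤
      L * ‖u - v‖)
    (hKsupp : ∀ u, 1 < ‖u‖ → K u = 0) {z z' : ℝ × ℝ}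
    (ht : max |z.1 - z'.1| |z.2 - z'.2| / h = t) (q r : MIdx m) :
    |∑ e, (Umon m q (scaledPair x h z' e) * Umon m r (scaledPair x h z' e) *
        pairKernel K x h z' e -
      Umon m q (scaledPair x h z e) * Umon m r (scaledPair x h z e) * pairKernel K x h z e)| ≤
      2 * L * t * (2 * fmax * (p * h) + 1) ^ 2 := by
  refine (Finset.abs_sum_le_sum_abs _ _).trans (le_trans (Finset.sum_le_sum fun e _ => ?_)
    (hx.sum_abs_sub_le (H := fun u => Umon m q u * Umon m r u * K u) (z := z) (z' := z') (t := t)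
      hL0 hh (hL q r) (fun u hu => by rw [hKsupp u hu, mul_zero]) ?_ fun e => ?_))
  · unfold pairKernel
    split_ifs
    · exact le_rfl
    · simp only [mul_zero, sub_zero, abs_zero]
      exact abs_nonneg _
  · rw [← ht]
    positivity
  · rw [norm_sub_rev, norm_scaledPair_sub x hh, ht]

end Weights

/-- **Local polynomial weights satisfy the weight assumptions (Lemma 8 / Lemma `locpol`).**
Let the kernel `K ≥ 0` be Lipschitz continuous, compactly supported in `[−1,1]²`, with
`K_min 𝟙{−Δ ≤ u₁,u₂ ≤ Δ} ≤ K ≤ K_max`.  Under Assumption 4 there are, for each order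
`m ∈ ℕ`, a large enough `p₀ ∈ ℕ`, small enough `h₀ > 0` and large enough `c > 0`, together
with constants `C₁, C₂ > 0`, such that for all `p ≥ p₀` and all `h ∈ (c/p, h₀]` the
restricted bivariate local polynomial estimator of order `m` is unique, is the linear
estimator `Σ_{j<k} w_{j,k}(x,y;h) z_{j,k}`, and its weights satisfy (W1) with reproduction
degree `m`, (W2), (W3) and (W4). -/
theorem local_polynomial_weights
    (m : ℕ) (K : ℝ × ℝ → ℝ) (Δ Kmin Kmax : ℝ)
    (hΔ : 0 < Δ) (hKmin : 0 < Kmin) (hKmax : 0 < Kmax)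
    (hK0 : ∀ u, 0 ≤ K u)
    (hKlip : ∃ Kl : NNReal, LipschitzWith Kl K)
    (hKsupp : ∀ u : ℝ × ℝ, ¬(|u.1| ≤ 1 ∧ |u.2| ≤ 1) → K u = 0)
    (hKbd : ∀ u : ℝ × ℝ, K u ≤ Kmax ∧
      (u.1 ∈ Set.Icc (-Δ) Δ → u.2 ∈ Set.Icc (-Δ) Δ → Kmin ≤ K u))
    (f : ℝ → ℝ) (fmin fmax : ℝ) :
    ∃ (p₀ : ℕ) (h₀ c C₁ C₂ : ℝ), 0 < h₀ ∧ 0 < c ∧ 0 < C₁ ∧ 0 < C₂ ∧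
      ∀ (p : ℕ), p₀ ≤ p → ∀ x : Fin p → ℝ, DesignQuantile f fmin fmax x →
      ∀ h ∈ Set.Ioc (c / p) h₀,
        ∃ w : ℝ × ℝ → Fin p → Fin p → ℝ,
          -- uniqueness of the minimizer and linear representation of its first coordinate
          (∀ z ∈ upperT, ∀ data : Fin p → Fin p → ℝ,
            (∃! θ : MIdx m → ℝ, ∀ θ' : MIdx m → ℝ,
              lpLoss m K x h z data θ ≤ lpLoss m K x h z data θ') ∧
            (∀ θ : MIdx m → ℝ,
              (∀ θ' : MIdx m → ℝ, lpLoss m K x h z data θ ≤ lpLoss m K x h z data θ') →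
              θ ⟨(0, 0), by simp⟩ = pairSum (fun j k => w z j k * data j k))) ∧
          -- (W1) with reproduction degree m
          (∀ z ∈ upperT, pairSum (w z) = 1 ∧
            ∀ r₁ r₂ : ℕ, 0 < r₁ + r₂ → r₁ + r₂ ≤ m →
              pairSum (fun j k => (x j - z.1) ^ r₁ * (x k - z.2) ^ r₂ * w z j k) = 0) ∧
          -- (W2)
          (∀ z ∈ upperT, ∀ j k : Fin p,
            h < max |x j - z.1| |x k - z.2| → w z j k = 0) ∧
          -- (W3)
          (∀ z ∈ upperT, ∀ j k : Fin p, |w z j k| ≤ C₁ / ((p : ℝ) * h) ^ 2) ∧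
          -- (W4)
          (∀ z ∈ upperT, ∀ z' ∈ upperT, ∀ j k : Fin p,
            |w z j k - w z' j k|
              ≤ C₂ / ((p : ℝ) * h) ^ 2 * min (max |z.1 - z'.1| |z.2 - z'.2| / h) 1) := by
  by_cases hf : 0 < fmin ∧ fmin ≤ fmax
  swap
  · exact ⟨0, 1, 1, 1, 1, one_pos, one_pos, one_pos, one_pos, fun p _ x hx =>
      absurd ⟨hx.1, hx.2.1⟩ hf⟩
  obtain ⟨hfmin, hfmm⟩ := hf
  have hfmax : 0 < fmax := hfmin.trans_le hfmm
  obtain ⟨Kl, hKl⟩ := hKlip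
  have hKabs : ∀ u, |K u| ≤ Kmax := fun u => by
    rw [abs_of_nonneg (hK0 u)]
    exact (hKbd u).1
  have hKzero : ∀ u, 1 < ‖u‖ → K u = 0 := fun u hu => by
    refine hKsupp u fun hle => ?_
    rw [Prod.norm_def, Real.norm_eq_abs, Real.norm_eq_abs] at hu
    exact absurd (max_le hle.1 hle.2) (not_le.2 hu)
  obtain ⟨δ, hδ, hδ1, hδΔ⟩ : ∃ δ : ℝ, 0 < δ ∧ 3 * δ ≤ 1 ∧ 3 * δ ≤ Δ :=
    ⟨min Δ 1 / 3, by positivity, by linarith [min_le_right Δ 1], by linarith [min_le_left Δ 1]⟩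
  have hKlow : ∀ u : ℝ × ℝ, |u.1| ≤ 3 * δ → |u.2| ≤ 3 * δ → Kmin ≤ K u := fun u h1 h2 =>
    (hKbd u).2 (Set.mem_Icc.2 (abs_le.1 (h1.trans hδΔ))) (Set.mem_Icc.2 (abs_le.1 (h2.trans hδΔ)))
  obtain ⟨η, hη, hηδ⟩ : ∃ η : ℝ, 0 < η ∧ (2 * (m : ℝ) + 1) * η = δ :=
    ⟨δ / (2 * m + 1), by positivity, by field_simp⟩
  obtain ⟨lam, hlam, hgrid⟩ := exists_grid_lower_bound m hη
  obtain ⟨M, L, hM0, hL0, hM, hL, hLL⟩ := exists_moment_bounds (m := m) hKl hKabs hKzero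
  obtain ⟨N, hN⟩ : ∃ N : ℝ, N = Fintype.card (MIdx m) := ⟨_, rfl⟩
  have hN0 : 0 ≤ N := by rw [hN]; positivity
  obtain ⟨μ₀, hμ₀⟩ : ∃ μ₀ : ℝ, μ₀ = Kmin * lam * (fmin * η / 2) ^ 2 := ⟨_, rfl⟩
  have hμ₀pos : 0 < μ₀ := by rw [hμ₀]; positivity
  obtain ⟨R, hR⟩ : ∃ R : ℝ, R = 2 * fmax + fmin * η := ⟨_, rfl⟩
  have hRpos : 0 < R := by rw [hR]; positivity
  obtain ⟨C₁, hC₁⟩ : ∃ C₁ : ℝ, C₁ = N * (M / μ₀) + 1 := ⟨_, rfl⟩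
  have hC₁pos : 0 < C₁ := by rw [hC₁]; positivity
  obtain ⟨C₂, hC₂⟩ : ∃ C₂ : ℝ,
      C₂ = N * (N ^ 2 * (2 * L * R ^ 2) / μ₀ ^ 2 * M + L / μ₀) + 2 * C₁ := ⟨_, rfl⟩
  have hC₂pos : 0 < C₂ := by rw [hC₂]; positivity
  refine ⟨1, 1 / 4, 1 / (fmin * η), C₁, C₂, by norm_num, by positivity, hC₁pos, hC₂pos, ?_⟩
  rintro p hp x hx h ⟨hch, hh4⟩
  have hp0 : 0 < p := hp
  have hp' : (0 : ℝ) < p := by exact_mod_cast hp0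
  have hh : 0 < h := lt_of_le_of_lt (by positivity) hch
  obtain ⟨X, hX⟩ : ∃ X : ℝ, X = p * h := ⟨_, rfl⟩
  have hXpos : 0 < X := by rw [hX]; positivity
  have hXc : 1 ≤ fmin * η * X := by
    rw [div_div, div_lt_iff₀ (by positivity)] at hch
    rw [hX]
    linarith
  -- the number of design points in each of the small intervals
  obtain ⟨n, hnle, hnge⟩ : ∃ n : ℕ, (n : ℝ) ≤ p * (fmin * (h * η)) ∧ fmin * η / 2 * X ≤ n := by
    have heq : p * (fmin * (h * η)) = fmin * η * X := by rw [hX]; ring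
    refine ⟨⌊(p : ℝ) * (fmin * (h * η))⌋₊, Nat.floor_le (by positivity), ?_⟩
    rw [heq]
    have h1 : (1 : ℝ) ≤ (⌊fmin * η * X⌋₊ : ℕ) := by exact_mod_cast Nat.one_le_floor_iff _ |>.2 hXc
    have h2 := Nat.lt_floor_add_one (fmin * η * X)
    linarith
  have hμpos : 0 < μ₀ * X ^ 2 := by positivity
  have hco : ∀ z ∈ upperT, ∀ v : MIdx m → ℝ, μ₀ * X ^ 2 * ∑ q, v q ^ 2 ≤
      ∑ e, pairKernel K x h z e * (∑ r, v r * Umon m r (scaledPair x h z e)) ^ 2 := by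
    intro z hz v
    refine le_trans ?_ (hx.gram_coercive hp0 hK0 hKmin.le hKlow hδ hδ1 hηδ hgrid hh hh4 hnle hz v)
    refine mul_le_mul_of_nonneg_right ?_ (Finset.sum_nonneg fun q _ => sq_nonneg _)
    calc μ₀ * X ^ 2 = Kmin * lam * (fmin * η / 2 * X) ^ 2 := by rw [hμ₀]; ring
      _ ≤ Kmin * lam * (n : ℝ) ^ 2 := by gcongr
  have hpos : ∀ z ∈ upperT, ∀ v : MIdx m → ℝ,
      ∑ e, pairKernel K x h z e * (∑ r, v r * Umon m r (scaledPair x h z e)) ^ 2 ≤ 0 → v = 0 := by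
    intro z hz v hv
    have h1 := (hco z hz v).trans hv
    have h2 := norm_sq_le_sum_sq v
    have h3 : ‖v‖ ^ 2 ≤ 0 := h2.trans (nonpos_of_mul_nonpos_right h1 hμpos)
    exact norm_eq_zero.1 (pow_eq_zero_iff two_ne_zero |>.1 (le_antisymm h3 (sq_nonneg _)))
  have hex : ∀ z, ∃ g : MIdx m → ℝ, z ∈ upperT → ∀ q, ∑ e, pairKernel K x h z e *
      (∑ r, g r * Umon m r (scaledPair x h z e)) * Umon m q (scaledPair x h z e) =
        if q = MIdx.zero m then 1 else 0 := by
    intro z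
    by_cases hz : z ∈ upperT
    · obtain ⟨g, hg⟩ := exists_gram_solution (U := fun e r => Umon m r (scaledPair x h z e))
        (hpos z hz) fun q => if q = MIdx.zero m then 1 else 0
      exact ⟨g, fun _ => hg⟩
    · exact ⟨0, fun h => absurd h hz⟩
  choose g hg using hex
  have hgnorm : ∀ z ∈ upperT, ‖g z‖ ≤ 1 / (μ₀ * X ^ 2) := fun z hz =>
    gram_row_norm_le (U := fun e r => Umon m r (scaledPair x h z e)) hμpos (hco z hz) (hg z hz)
  have hW3 : ∀ z ∈ upperT, ∀ j k, |lpWeight m K x h g z j k| ≤ C₁ / X ^ 2 := by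
    intro z hz j k
    rw [lpWeight_eq_sum]
    refine (abs_sum_mul_le (hgnorm z hz) fun r => hM r _).trans ?_
    rw [← hN, le_div_iff₀ (by positivity), hC₁]
    have : N * (1 / (μ₀ * X ^ 2) * M) * X ^ 2 = N * (M / μ₀) := by field_simp
    linarith
  refine ⟨lpWeight m K x h g, fun z hz d => lpLoss_minimizer hK0 (hpos z hz) (hg z hz) d,
    fun z hz => lpWeight_reproduces hh.ne' (hg z hz), fun z _ j k => lpWeight_eq_zero hh hKzero,
    ?_, ?_⟩
  · rw [← hX]
    exact hW3
  rw [← hX]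
  intro z hz z' hz' j k
  obtain ⟨t, ht⟩ : ∃ t, max |z.1 - z'.1| |z.2 - z'.2| / h = t := ⟨_, rfl⟩
  have ht0 : 0 ≤ t := by rw [← ht]; positivity
  have hRX : 2 * fmax * (p * h) + 1 ≤ R * X := by
    rw [← hX, hR]
    linarith
  have hRX0 : 0 ≤ 2 * fmax * (p * h) + 1 := by positivity
  have hgram : ∀ q r, |∑ e, (Umon m q (scaledPair x h z' e) * Umon m r (scaledPair x h z' e) *
      pairKernel K x h z' e -
      Umon m q (scaledPair x h z e) * Umon m r (scaledPair x h z e) * pairKernel K x h z e)| ≤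
      2 * L * t * (R * X) ^ 2 := fun q r =>
    (abs_sum_gram_sub_le hx hh hL0 hLL hKzero ht q r).trans (by gcongr)
  have hdiff : ‖g z - g z'‖ ≤ N ^ 2 * (2 * L * t * (R * X) ^ 2) * (1 / (μ₀ * X ^ 2)) /
      (μ₀ * X ^ 2) := by
    refine (gram_row_sub_norm_le (U := fun e r => Umon m r (scaledPair x h z e))
      (U' := fun e r => Umon m r (scaledPair x h z' e)) hμpos (hco z hz) (hg z hz) (hg z' hz')
      hgram).trans ?_
    rw [← hN]
    gcongr
    exact hgnorm z' hz'
  rw [ht]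
  rcases min_choice t 1 with hmin | hmin <;> rw [hmin]
  · refine (abs_lpWeight_sub_le hh hM hL ht hdiff (hgnorm z' hz') j k).trans ?_
    rw [← hN]
    have heq : N * (N ^ 2 * (2 * L * t * (R * X) ^ 2) * (1 / (μ₀ * X ^ 2)) / (μ₀ * X ^ 2) * M +
        1 / (μ₀ * X ^ 2) * (L * t)) =
        N * (N ^ 2 * (2 * L * R ^ 2) / μ₀ ^ 2 * M + L / μ₀) / X ^ 2 * t := by
      field_simp
    rw [heq]
    gcongr
    rw [hC₂]
    linarith
  · have h1 := hW3 z hz j k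
    have h2 := hW3 z' hz' j k
    calc _ ≤ |lpWeight m K x h g z j k| + |lpWeight m K x h g z' j k| := abs_sub _ _
      _ ≤ C₁ / X ^ 2 + C₁ / X ^ 2 := add_le_add h1 h2
      _ = 2 * C₁ / X ^ 2 * 1 := by ring
      _ ≤ C₂ / X ^ 2 * 1 := by
        gcongr
        rw [hC₂]
        have : 0 ≤ N * (N ^ 2 * (2 * L * R ^ 2) / μ₀ ^ 2 * M + L / μ₀) := by positivity
        linarith
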